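/- arXiv:math/0411153 — 3 statements merged into one kernel-verified Lean document; each statement's English description precedes it below -/
import Mathlib

section
/- Fan's theorem: for Hermitian n×n matrices A and B, the eigenvalue sequence of A+B (in non-increasing order) is majorized by the entrywise sum of the eigenvalue sequences of A and B (each in non-increasing order). -/
def Majorizes {I K : Type*} [Fintype I] [Fintype K] (y : I → ℝ) (x : K → ℝ) : Prop :=
  (∀ A : Finset K, ∃ B : Finset I, B.card = A.card ∧ ∑ i ∈ A, x i ≤ ∑ i ∈ B, y i) ∧
  (∑ i, x i) = (∑ i, y i)

/-!
Let `w` be an orthonormal eigenbasis of `A + B`, so that each eigenvalue of `A + B` is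
`⟪w j, A (w j)⟫ + ⟪w j, B (w j)⟫`. In an eigenbasis `u` of `A`, the sum of `⟪w j, A (w j)⟫` over `k`
indices `j` is a combination of the eigenvalues of `A` whose weights `∑ j, ‖⟪u i, w j⟫‖ ^ 2` lie in
`[0, 1]`, by Bessel's inequality, and have total mass `k`, by Parseval's identity; such a
combination is at most the sum of the `k` largest eigenvalues (Ky Fan's maximum principle). The same
holds for `B`, and the two bounds add up. Equality of the totals is additivity of the trace.
-/

open scoped InnerProductSpace

section Weights

variable {ι R : Type*} {a : ι → R} {s : Finset ι}

theorem exists_threshold [Finite ι] [LinearOrder R] [Nonempty R]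
    (hs : ∀ i ∈ s, ∀ j ∉ s, a j ≤ a i) :
    ∃ t, (∀ i ∈ s, t ≤ a i) ∧ ∀ j ∉ s, a j ≤ t := by
  rcases s.eq_empty_or_nonempty with rfl | hne
  · obtain ⟨t, ht⟩ := (Set.finite_range a).bddAbove
    exact ⟨t, by simp, fun j _ => ht ⟨j, rfl⟩⟩
  · obtain ⟨m, hm, hmin⟩ := s.exists_min_image a hne
    exact ⟨a m, hmin, hs m hm⟩

theorem sum_mul_le_sum_of_sum_eq_card [Fintype ι] [CommRing R] [LinearOrder R] [IsOrderedRing R]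
    (hs : ∀ i ∈ s, ∀ j ∉ s, a j ≤ a i) {w : ι → R} (hw0 : ∀ i, 0 ≤ w i) (hw1 : ∀ i, w i ≤ 1)
    (hw : ∑ i, w i = s.card) :
    ∑ i, a i * w i ≤ ∑ i ∈ s, a i := by
  classical
  obtain ⟨t, ht_le, hle_t⟩ := exists_threshold hs
  have hterm : ∀ i, (a i - t) * w i ≤ if i ∈ s then a i - t else 0 := fun i => by
    split_ifs with hi
    · exact mul_le_of_le_one_right (sub_nonneg.2 (ht_le i hi)) (hw1 i)
    · exact mul_nonpos_of_nonpos_of_nonneg (sub_nonpos.2 (hle_t i hi)) (hw0 i)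
  calc ∑ i, a i * w i
      = ∑ i, (a i - t) * w i + t * s.card := by
        simp only [sub_mul, Finset.sum_sub_distrib, ← Finset.mul_sum, hw, sub_add_cancel]
    _ ≤ ∑ i ∈ s, (a i - t) + t * s.card := by
        rw [← Finset.sum_ite_mem_eq s]
        gcongr with i
        exact hterm i
    _ = ∑ i ∈ s, a i := by
        simp only [Finset.sum_sub_distrib, Finset.sum_const, nsmul_eq_mul, mul_comm t,
          sub_add_cancel]

end Weights

section Eigenbasis

variable {𝕜 E ι : Type*} [RCLike 𝕜] [NormedAddCommGroup E] [InnerProductSpace 𝕜 E] [Fintype ι]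
  {T : E →ₗ[𝕜] E} {u : OrthonormalBasis ι 𝕜 E} {a : ι → ℝ}

theorem re_inner_map_eq_sum_mul_norm_inner_sq (hu : ∀ i, T (u i) = (a i : 𝕜) • u i) (x : E) :
    RCLike.re ⟪x, T x⟫_𝕜 = ∑ i, a i * ‖⟪u i, x⟫_𝕜‖ ^ 2 := by
  have hTx : T x = ∑ i, ⟪u i, x⟫_𝕜 • (a i : 𝕜) • u i := by
    conv_lhs => rw [← u.sum_repr' x]
    simp only [map_sum, map_smul, hu]
  rw [hTx, inner_sum, map_sum]
  refine Finset.sum_congr rfl fun i _ => ?_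
  rw [inner_smul_right, inner_smul_right, mul_left_comm, RCLike.re_ofReal_mul,
    inner_mul_symm_re_eq_norm, norm_mul, norm_inner_symm x, sq]

theorem sum_re_inner_map_le_sum_eigenvalues (hu : ∀ i, T (u i) = (a i : 𝕜) • u i)
    {s : Finset ι} (hs : ∀ i ∈ s, ∀ j ∉ s, a j ≤ a i)
    {κ : Type*} {v : κ → E} (hv : Orthonormal 𝕜 v) {J : Finset κ} (hcard : s.card = J.card) :
    ∑ j ∈ J, RCLike.re ⟪v j, T (v j)⟫_𝕜 ≤ ∑ i ∈ s, a i := by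
  have hbessel : ∀ i, ∑ j ∈ J, ‖⟪u i, v j⟫_𝕜‖ ^ 2 ≤ 1 := fun i => by
    simpa only [norm_inner_symm, u.norm_eq_one, one_pow] using
      hv.sum_inner_products_le (u i) (s := J)
  have hparseval : ∑ i, ∑ j ∈ J, ‖⟪u i, v j⟫_𝕜‖ ^ 2 = s.card := by
    rw [Finset.sum_comm]
    simp [u.sum_sq_norm_inner_right, hv.norm_eq_one, hcard]
  calc ∑ j ∈ J, RCLike.re ⟪v j, T (v j)⟫_𝕜
      = ∑ i, a i * ∑ j ∈ J, ‖⟪u i, v j⟫_𝕜‖ ^ 2 := by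
        simp only [re_inner_map_eq_sum_mul_norm_inner_sq hu, Finset.mul_sum]
        exact Finset.sum_comm
    _ ≤ ∑ i ∈ s, a i :=
        sum_mul_le_sum_of_sum_eq_card hs (fun i => by positivity) hbessel hparseval

theorem inner_map_eigenbasis (hu : ∀ i, T (u i) = (a i : 𝕜) • u i) (i : ι) :
    ⟪u i, T (u i)⟫_𝕜 = a i := by
  rw [hu, inner_smul_right, u.inner_eq_one, mul_one]

theorem sum_eigenvalues_eq_trace (hu : ∀ i, T (u i) = (a i : 𝕜) • u i) :
    ((∑ i, a i : ℝ) : 𝕜) = T.trace 𝕜 E := by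
  simp only [T.trace_eq_sum_inner u, inner_map_eigenbasis hu, RCLike.ofReal_sum]

end Eigenbasis

theorem fan_theorem_general {𝕜 E : Type*} [RCLike 𝕜] [NormedAddCommGroup E] [InnerProductSpace 𝕜 E]
    {n : ℕ} {S T : E →ₗ[𝕜] E} {u v w : OrthonormalBasis (Fin n) 𝕜 E} {a b c : Fin n → ℝ}
    (ha : Antitone a) (hb : Antitone b) (hu : ∀ i, S (u i) = (a i : 𝕜) • u i)
    (hv : ∀ i, T (v i) = (b i : 𝕜) • v i) (hw : ∀ i, (S + T) (w i) = (c i : 𝕜) • w i) :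
    Majorizes (a + b) c := by
  refine ⟨fun J => ?_, ?_⟩
  · let s : Finset (Fin n) := {i | i.val < J.card}
    have hcard : s.card = J.card := by
      rw [Fin.card_filter_val_lt, min_eq_right (card_finset_fin_le J)]
    have hs : ∀ i ∈ s, ∀ j ∉ s, i ≤ j := by grind
    have hc : ∀ j, c j = RCLike.re ⟪w j, S (w j)⟫_𝕜 + RCLike.re ⟪w j, T (w j)⟫_𝕜 := fun j => by
      rw [← map_add, ← inner_add_right, ← LinearMap.add_apply, inner_map_eigenbasis hw,
        RCLike.ofReal_re]
    refine ⟨s, hcard, ?_⟩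
    simp only [hc, Pi.add_apply, Finset.sum_add_distrib]
    exact add_le_add
      (sum_re_inner_map_le_sum_eigenvalues hu (fun i hi j hj => ha (hs i hi j hj))
        w.orthonormal hcard)
      (sum_re_inner_map_le_sum_eigenvalues hv (fun i hi j hj => hb (hs i hi j hj))
        w.orthonormal hcard)
  · apply RCLike.ofReal_injective (K := 𝕜)
    simp only [Pi.add_apply, Finset.sum_add_distrib, map_add,
      sum_eigenvalues_eq_trace hu, sum_eigenvalues_eq_trace hv, sum_eigenvalues_eq_trace hw]

theorem toEuclideanLin_eigenvectorBasis_reindex {𝕜 ι κ : Type*} [RCLike 𝕜] [Fintype ι]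
    [DecidableEq ι] [Fintype κ] {A : Matrix ι ι 𝕜} (hA : A.IsHermitian) (σ : κ ≃ ι) (i : κ) :
    A.toEuclideanLin (hA.eigenvectorBasis.reindex σ.symm i) =
      ((hA.eigenvalues ∘ σ) i : 𝕜) • hA.eigenvectorBasis.reindex σ.symm i := by
  ext j
  simpa [RCLike.real_smul_eq_coe_mul] using congrFun (hA.mulVec_eigenvectorBasis (σ i)) j

theorem fan_theorem {n : ℕ} (A B : Matrix (Fin n) (Fin n) ℂ)
    (hA : A.IsHermitian) (hB : B.IsHermitian) (hAB : (A + B).IsHermitian)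
    (a b c : Fin n → ℝ) (ha : Antitone a) (hb : Antitone b) (hc : Antitone c)
    (hae : ∃ σ : Equiv.Perm (Fin n), a = hA.eigenvalues ∘ σ)
    (hbe : ∃ σ : Equiv.Perm (Fin n), b = hB.eigenvalues ∘ σ)
    (hce : ∃ σ : Equiv.Perm (Fin n), c = hAB.eigenvalues ∘ σ) :
    Majorizes (a + b) c := by
  obtain ⟨σ, rfl⟩ := hae
  obtain ⟨τ, rfl⟩ := hbe
  obtain ⟨ρ, rfl⟩ := hce
  exact fan_theorem_general ha hb (toEuclideanLin_eigenvectorBasis_reindex hA σ)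
    (toEuclideanLin_eigenvectorBasis_reindex hB τ)
    (by simpa only [map_add] using toEuclideanLin_eigenvectorBasis_reindex hAB ρ)
end

section
/- The Grone–Merris conjecture holds for G if and only if it holds for its complement Ḡ: λ(G) ⊴ d^T(G) implies and is implied by λ(Ḡ) ⊴ d^T(Ḡ). -/
/-!
By Hardy–Littlewood–Pólya, `x ⊴ y` says that `∑ (xᵢ - t)⁺ ≤ ∑ (yⱼ - t)⁺` for every `t`, with equal
totals. Both conditions are additive in the multisets of entries, so an entry common to `x` and `y`
may be adjoined or cancelled; moreover `x ⊴ y` iff `n - x ⊴ n - y`.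

Write `L`, `L'` for the Laplacians of `G`, `Gᶜ`, and `J` for the all-ones matrix. Since
`L' + J = n - L` and `L' J = 0`, adjoining `0` to the numbers `n - λᵢ(G)` gives the same multiset as
adjoining `n` to the numbers `λᵢ(Gᶜ)`. The conjugate degree sequences are related in the same way,
so passing from `G` to `Gᶜ` amounts to a reflection and an exchange of common entries.
-/

open Finset Polynomial
open scoped Matrix

section Majorization

variable {I K : Type*} [Fintype I] [Fintype K]

section PosPart

variable {α : Type*} [AddCommGroup α] [LinearOrder α] [IsOrderedAddMonoid α]

theorem sum_sub_le_sum_posPart (y : I → α) (t : α) (s : Finset I) :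
    ∑ i ∈ s, (y i - t) ≤ ∑ i, (y i - t)⁺ :=
  (sum_le_sum fun _ _ => le_posPart _).trans <|
    sum_le_univ_sum_of_nonneg fun _ => posPart_nonneg _

theorem sum_posPart_eq_sum_sub {y : I → α} {t : α} {s : Finset I} (hs : ∀ i ∈ s, t ≤ y i)
    (hs' : ∀ i ∉ s, y i ≤ t) : ∑ i, (y i - t)⁺ = ∑ i ∈ s, (y i - t) := by
  rw [← sum_subset s.subset_univ fun i _ hi => posPart_of_nonpos (sub_nonpos.2 (hs' i hi))]
  exact sum_congr rfl fun i hi => posPart_of_nonneg (sub_nonneg.2 (hs i hi))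

end PosPart

theorem exists_card_eq_forall_mem_le_forall_notMem_ge {α : Type*} [LinearOrder α] [Nonempty α]
    (y : I → α) {k : ℕ} (hk : k ≤ Fintype.card I) :
    ∃ s : Finset I, ∃ t : α, #s = k ∧ (∀ i ∈ s, t ≤ y i) ∧ ∀ i ∉ s, y i ≤ t := by
  classical
  induction k with
  | zero =>
    obtain ⟨t, ht⟩ := (Set.finite_range y).bddAbove
    exact ⟨∅, t, card_empty, by simp, fun i _ => ht ⟨i, rfl⟩⟩
  | succ k ih =>
    obtain ⟨s, t, rfl, hs, hs'⟩ := ih (by omega)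
    have hne : sᶜ.Nonempty := by
      rw [← card_pos, card_compl]
      omega
    obtain ⟨j, hj, hmax⟩ := exists_max_image sᶜ y hne
    rw [mem_compl] at hj
    refine ⟨insert j s, y j, card_insert_of_notMem hj, ?_, fun i hi => hmax i ?_⟩
    · exact (forall_mem_insert ..).2 ⟨le_rfl, fun i hi => (hs' j hj).trans (hs i hi)⟩
    · exact mem_compl.2 fun his => hi (mem_insert_of_mem his)

theorem majorizes_iff_sum_posPart_le (hcard : Fintype.card K ≤ Fintype.card I) {y : I → ℝ}
    {x : K → ℝ} :
    Majorizes y x ↔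
      (∀ t, ∑ i, (x i - t)⁺ ≤ ∑ i, (y i - t)⁺) ∧ ∑ i, x i = ∑ i, y i := by
  refine and_congr_left fun _ => ⟨fun H t => ?_, fun H A => ?_⟩
  · obtain ⟨B, hB, hAB⟩ := H {i | t ≤ x i}
    calc ∑ i, (x i - t)⁺ = ∑ i with t ≤ x i, (x i - t) :=
          sum_posPart_eq_sum_sub (by simp) (by simpa using fun i hi => le_of_lt hi)
      _ ≤ ∑ i ∈ B, (y i - t) := by simpa [sum_sub_distrib, hB] using hAB
      _ ≤ ∑ i, (y i - t)⁺ := sum_sub_le_sum_posPart y t B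
  · obtain ⟨B, t, hB, hle, hge⟩ :=
      exists_card_eq_forall_mem_le_forall_notMem_ge y (A.card_le_univ.trans hcard)
    have hsum : ∑ i ∈ A, (x i - t) ≤ ∑ i ∈ B, (y i - t) :=
      calc ∑ i ∈ A, (x i - t) ≤ ∑ i, (x i - t)⁺ := sum_sub_le_sum_posPart x t A
        _ ≤ ∑ i, (y i - t)⁺ := H t
        _ = ∑ i ∈ B, (y i - t) := sum_posPart_eq_sum_sub hle hge
    exact ⟨B, hB, by simpa [sum_sub_distrib, hB] using hsum⟩

theorem sum_map_add_sum_eq_of_add_map_eq_add_map {α M : Type*} [AddCommMonoid M]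
    {P Q : Multiset α} {z z' : I → α} (hz : P + univ.val.map z = Q + univ.val.map z')
    (f : α → M) : (P.map f).sum + ∑ i, f (z i) = (Q.map f).sum + ∑ i, f (z' i) := by
  simpa using congrArg (fun S => (S.map f).sum) hz

theorem majorizes_congr_of_add_map_eq_add_map (hcard : Fintype.card K ≤ Fintype.card I)
    {y y' : I → ℝ} {x x' : K → ℝ} {P Q : Multiset ℝ}
    (hy : P + univ.val.map y = Q + univ.val.map y')
    (hx : P + univ.val.map x = Q + univ.val.map x') :
    Majorizes y x ↔ Majorizes y' x' := by
  rw [majorizes_iff_sum_posPart_le hcard, majorizes_iff_sum_posPart_le hcard]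
  refine and_congr (forall_congr' fun t => ?_) ?_
  · have hxt := sum_map_add_sum_eq_of_add_map_eq_add_map hx fun r => (r - t)⁺
    have hyt := sum_map_add_sum_eq_of_add_map_eq_add_map hy fun r => (r - t)⁺
    constructor <;> intro <;> linarith
  · have hxsum := sum_map_add_sum_eq_of_add_map_eq_add_map hx fun r => r
    have hysum := sum_map_add_sum_eq_of_add_map_eq_add_map hy fun r => r
    constructor <;> intro <;> linarith

theorem Majorizes.const_sub {y : I → ℝ} {x : K → ℝ} (H : Majorizes y x)
    (hcard : Fintype.card K = Fintype.card I) (c : ℝ) :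
    Majorizes (fun i => c - y i) (fun i => c - x i) := by
  classical
  refine ⟨fun A => ?_, by simp [sum_sub_distrib, hcard, H.2]⟩
  obtain ⟨B, hB, hAB⟩ := H.1 Aᶜ
  have hBA : #Bᶜ = #A := by
    have := A.card_le_univ
    rw [card_compl] at hB ⊢
    omega
  have hx := sum_add_sum_compl A x
  have hy := sum_add_sum_compl B y
  refine ⟨Bᶜ, hBA, ?_⟩
  simp only [sum_sub_distrib, sum_const, hBA]
  linarith [H.2]

theorem majorizes_const_sub_iff {y : I → ℝ} {x : K → ℝ}
    (hcard : Fintype.card K = Fintype.card I) (c : ℝ) :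
    Majorizes (fun i => c - y i) (fun i => c - x i) ↔ Majorizes y x :=
  ⟨fun H => by simpa using H.const_sub hcard c, fun H => H.const_sub hcard c⟩

end Majorization

section CharacteristicPolynomial

variable {V R : Type*} [Fintype V] [DecidableEq V] [CommRing R]

theorem charpoly_mul_charpoly_of_mul_eq_zero {A B : Matrix V V R} (hAB : A * B = 0) :
    A.charpoly * B.charpoly = X ^ Fintype.card V * (A + B).charpoly := by
  have hC : A.map C * B.map C = 0 := by rw [← Matrix.map_mul, hAB, Matrix.map_zero _ C_0]
  have hmul : A.charmatrix * B.charmatrix = (X : R[X]) • (A + B).charmatrix := by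
    simp only [Matrix.charmatrix, RingHom.mapMatrix_apply, Matrix.scalar_apply,
      ← Matrix.smul_one_eq_diagonal, Matrix.map_add C (fun _ _ => C_add), sub_mul, mul_sub, hC,
      smul_sub, smul_add, smul_mul_assoc, mul_smul_comm, one_mul, mul_one]
    abel
  simp only [Matrix.charpoly, ← Matrix.det_mul, hmul, Matrix.det_smul]

theorem charpoly_scalar_sub (M : Matrix V V R) (c : R) :
    (Matrix.scalar V c - M).charpoly =
      (-1) ^ Fintype.card V * M.charpoly.comp (C c - X) := by
  have hmatrix : (Matrix.scalar V c - M).charmatrix =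
      -M.charmatrix.map (compRingHom (C c - X)) := by
    ext1 i j
    rcases eq_or_ne i j with rfl | hij
    · simp only [Matrix.charmatrix_apply_eq, Matrix.sub_apply, Matrix.scalar_apply,
        Matrix.diagonal_apply_eq, Matrix.neg_apply, Matrix.map_apply, coe_compRingHom_apply,
        C_sub, sub_comp, X_comp, C_comp]
      ring
    · simp [hij]
  rw [Matrix.charpoly, hmatrix, Matrix.det_neg, ← RingHom.mapMatrix_apply, ← RingHom.map_det]
  rfl

theorem roots_charpoly_scalar_sub [IsDomain R] (M : Matrix V V R) (c : R) :
    (Matrix.scalar V c - M).charpoly.roots = M.charpoly.roots.map (c - ·) := by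
  have hlinear : C c - X = C (-1) * X + C c := by
    rw [C_neg, C_1]
    ring
  have hsign : ((-1) ^ Fintype.card V : R) ≠ 0 := pow_ne_zero _ (neg_ne_zero.2 one_ne_zero)
  rw [charpoly_scalar_sub, ← C_1, ← C_neg, ← C_pow, roots_C_mul _ hsign, hlinear,
    ← map_roots_comp_C_mul_X_add_C M.charpoly (-1) c isUnit_one.neg]
  simp

end CharacteristicPolynomial

theorem degree_add_degree_compl_add_one {V : Type*} [Fintype V] (G : SimpleGraph V)
    [DecidableRel G.Adj] [DecidableRel Gᶜ.Adj] (v : V) :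
    G.degree v + Gᶜ.degree v + 1 = Fintype.card V := by
  classical
  have := G.degree_compl v
  have := G.degree_lt_card_verts v
  omega

section LaplacianOfComplement

variable {V R : Type*} [Fintype V] [DecidableEq V]
variable (G : SimpleGraph V) [DecidableRel G.Adj] [DecidableRel Gᶜ.Adj]

theorem lapMatrix_add_lapMatrix_compl_add_vecMulVec_one [Ring R] :
    G.lapMatrix R + Gᶜ.lapMatrix R + Matrix.vecMulVec 1 1 =
      Matrix.scalar V (Fintype.card V : R) := by
  ext v w
  rcases eq_or_ne v w with rfl | hvw
  · simp [SimpleGraph.lapMatrix, SimpleGraph.degMatrix, ← degree_add_degree_compl_add_one G v]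
  · by_cases h : G.Adj v w <;>
      simp [SimpleGraph.lapMatrix, SimpleGraph.degMatrix, -map_natCast, hvw, h]

theorem X_mul_charpoly_card_sub_lapMatrix [CommRing R] :
    X * (Matrix.scalar V (Fintype.card V : R) - G.lapMatrix R).charpoly =
      (X - C (Fintype.card V : R)) * (Gᶜ.lapMatrix R).charpoly := by
  have hmul : Gᶜ.lapMatrix R * Matrix.vecMulVec 1 1 = 0 := by
    have h1 : Gᶜ.lapMatrix R *ᵥ (1 : V → R) = 0 := Gᶜ.lapMatrix_mulVec_const_eq_zero
    rw [Matrix.mul_vecMulVec, h1, Matrix.zero_vecMulVec]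
  have hadd : Gᶜ.lapMatrix R + Matrix.vecMulVec 1 1 =
      Matrix.scalar V (Fintype.card V : R) - G.lapMatrix R := by
    rw [← lapMatrix_add_lapMatrix_compl_add_vecMulVec_one G]
    abel
  -- The factor `X` absorbs the truncated exponent `|V| - 1`, so that `V` may be empty.
  have hJ : X * (Matrix.vecMulVec (1 : V → R) 1).charpoly =
      (X - C (Fintype.card V : R)) * X ^ Fintype.card V := by
    rw [Matrix.charpoly_vecMulVec]
    cases hV : Fintype.card V with
    | zero => simp [hV]
    | succ m =>
      simp only [one_dotProduct_one, hV, smul_eq_C_mul, Nat.add_sub_cancel]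
      ring
  apply (isRegular_X_pow (Fintype.card V)).left
  have key := charpoly_mul_charpoly_of_mul_eq_zero hmul
  rw [hadd] at key
  linear_combination (Gᶜ.lapMatrix R).charpoly * hJ - X * key

theorem zero_cons_map_card_sub_roots_charpoly_lapMatrix [CommRing R] [IsDomain R] :
    0 ::ₘ (G.lapMatrix R).charpoly.roots.map ((Fintype.card V : R) - ·) =
      (Fintype.card V : R) ::ₘ (Gᶜ.lapMatrix R).charpoly.roots := by
  have hroots := congrArg roots (X_mul_charpoly_card_sub_lapMatrix (R := R) G)
  rwa [roots_mul (mul_ne_zero X_ne_zero (Matrix.charpoly_monic _).ne_zero),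
    roots_mul (mul_ne_zero (X_sub_C_ne_zero _) (Matrix.charpoly_monic _).ne_zero), roots_X,
    roots_X_sub_C, roots_charpoly_scalar_sub, Multiset.singleton_add, Multiset.singleton_add]
    at hroots

theorem zero_cons_map_card_sub_eigenvalues_lapMatrix (h : (G.lapMatrix ℝ).IsHermitian)
    (hc : (Gᶜ.lapMatrix ℝ).IsHermitian) :
    0 ::ₘ univ.val.map (fun v => Fintype.card V - h.eigenvalues v) =
      (Fintype.card V : ℝ) ::ₘ univ.val.map hc.eigenvalues := by
  have hroots := zero_cons_map_card_sub_roots_charpoly_lapMatrix (R := ℝ) G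
  rw [h.roots_charpoly_eq_eigenvalues, hc.roots_charpoly_eq_eigenvalues] at hroots
  simpa [Function.comp_def] using hroots

end LaplacianOfComplement

section ConjugateDegree

variable {V : Type*} [Fintype V]

/-- The `k`-th entry `dᵀₖ` of the conjugate of the degree sequence, indexed from `k = 1` as usual;
the extra value at `k = 0` is `|V|`. -/
def conjugateDegree (G : SimpleGraph V) [DecidableRel G.Adj] (k : ℕ) : ℕ :=
  #{v | k ≤ G.degree v}

theorem conjugateDegree_zero (G : SimpleGraph V) [DecidableRel G.Adj] :
    conjugateDegree G 0 = Fintype.card V := by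
  simp [conjugateDegree]

theorem conjugateDegree_compl_add_conjugateDegree (G : SimpleGraph V)
    [DecidableRel G.Adj] [DecidableRel Gᶜ.Adj] (k : ℕ) :
    conjugateDegree Gᶜ k + conjugateDegree G (Fintype.card V - k) = Fintype.card V := by
  have hcompl (v : V) : Fintype.card V - k ≤ G.degree v ↔ ¬ k ≤ Gᶜ.degree v := by
    have := degree_add_degree_compl_add_one G v
    omega
  simp only [conjugateDegree, hcompl]
  exact card_filter_add_card_filter_not _

theorem zero_cons_map_card_sub_conjugateDegree (G : SimpleGraph V)
    [DecidableRel G.Adj] [DecidableRel Gᶜ.Adj] {n : ℕ} (hn : Fintype.card V = n) :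
    0 ::ₘ univ.val.map (fun i : Fin n => (n : ℝ) - conjugateDegree G (i + 1)) =
      (n : ℝ) ::ₘ univ.val.map (fun i : Fin n => (conjugateDegree Gᶜ (i + 1) : ℝ)) := by
  have hcompl (k : Fin (n + 1)) :
      (conjugateDegree Gᶜ k : ℝ) = n - conjugateDegree G k.rev := by
    have := conjugateDegree_compl_add_conjugateDegree G k
    rw [hn] at this
    rw [eq_sub_iff_add_eq, Fin.val_rev, Nat.add_sub_add_right]
    exact_mod_cast this
  calc 0 ::ₘ univ.val.map (fun i : Fin n => (n : ℝ) - conjugateDegree G (i + 1))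
      = univ.val.map (fun k : Fin (n + 1) => (n : ℝ) - conjugateDegree G k) := by
        simp [Fin.univ_succ, Function.comp_def, conjugateDegree_zero, hn]
    _ = univ.val.map (fun k : Fin (n + 1) => (n : ℝ) - conjugateDegree G k.rev) := by
        conv_lhs => rw [← Multiset.map_univ_val_equiv Fin.revPerm, Multiset.map_map]
        rfl
    _ = univ.val.map (fun k : Fin (n + 1) => (conjugateDegree Gᶜ k : ℝ)) := by
        simp only [hcompl]
    _ = (n : ℝ) ::ₘ univ.val.map (fun i : Fin n => (conjugateDegree Gᶜ (i + 1) : ℝ)) := by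
        simp [Fin.univ_succ, Function.comp_def, conjugateDegree_zero, hn]

end ConjugateDegree

theorem groneMerris_iff_complement_general {V : Type*} [Fintype V] [DecidableEq V] {n : ℕ}
    (hn : Fintype.card V = n) (G : SimpleGraph V) [DecidableRel G.Adj] [DecidableRel Gᶜ.Adj]
    (h : (G.lapMatrix ℝ).IsHermitian) (hc : (Gᶜ.lapMatrix ℝ).IsHermitian) :
    Majorizes (fun i : Fin n => (conjugateDegree G (i + 1) : ℝ)) h.eigenvalues ↔
      Majorizes (fun i : Fin n => (conjugateDegree Gᶜ (i + 1) : ℝ)) hc.eigenvalues := by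
  have hcard : Fintype.card V = Fintype.card (Fin n) := by rw [hn, Fintype.card_fin]
  have hspec := zero_cons_map_card_sub_eigenvalues_lapMatrix G h hc
  have hdeg := zero_cons_map_card_sub_conjugateDegree G hn
  rw [hn] at hspec
  rw [← Multiset.singleton_add, ← Multiset.singleton_add] at hspec hdeg
  rw [← majorizes_const_sub_iff hcard n]
  exact majorizes_congr_of_add_map_eq_add_map hcard.le hdeg hspec

theorem groneMerris_iff_complement {n : ℕ} (G : SimpleGraph (Fin n))
    [DecidableRel G.Adj] [DecidableRel Gᶜ.Adj]
    (h : (G.lapMatrix ℝ).IsHermitian) (hc : (Gᶜ.lapMatrix ℝ).IsHermitian) :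
    Majorizes
        (fun i : Fin n => ((Finset.univ.filter fun v => (i : ℕ) + 1 ≤ G.degree v).card : ℝ))
        h.eigenvalues ↔
      Majorizes
        (fun i : Fin n => ((Finset.univ.filter fun v => (i : ℕ) + 1 ≤ Gᶜ.degree v).card : ℝ))
        hc.eigenvalues :=
  groneMerris_iff_complement_general (Fintype.card_fin n) G h hc
end

section
/- Let G = (V,E) be a finite simple graph and D ⊆ V a set of 'deleted' vertices with U = V \ D. Let L(E,D) be the principal submatrix of L(G) indexed by U (the Dirichlet Laplacian). Then L(E,D) = L(G|_U) + Diag(b), where G|_U is the induced subgraph on U and b_v is the number of edges from v ∈ U to D; consequently, if the Laplacian spectrum of G|_U is majorized by its conjugate degree sequence, then the spectrum of L(E,D) is majorized by d^T(G|_U) + a^T, where a is the degree sequence in D of edges between D and U. In particular, Grone–Merris for graphs implies Grone–Merris for (edge, vertex) pairs: s(E,D) ⊴ d^T(E,D). -/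
/-!
Write `L(E,D) = L(G|_U) + Diag(b)` and pass to an orthonormal eigenbasis of `L(E,D)`: its spectrum
is the sum of the diagonals, in that basis, of the two summands. The diagonal of a unitary conjugate
arises from the eigenvalues by a doubly stochastic matrix, so it is majorized by them (Schur, via
Birkhoff's theorem). Hence the first diagonal is majorized by the spectrum of `L(G|_U)`, and so by
`d^T(G|_U)`; the second is majorized by `b`, and so by `a^T` (Gale–Ryser). Finally, majorizations by
two decreasing sequences can be added, and `d^T(G|_U) + a^T = d^T(E,D)`.
-/

open Finset Matrix Unitary

section Majorization

theorem Majorizes.trans {I J K : Type*} [Fintype I] [Fintype J] [Fintype K]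
    {z : I → ℝ} {y : J → ℝ} {x : K → ℝ} (hzy : Majorizes z y) (hyx : Majorizes y x) :
    Majorizes z x := by
  refine ⟨fun A => ?_, hyx.2.trans hzy.2⟩
  obtain ⟨B, hB, hAB⟩ := hyx.1 A
  obtain ⟨C, hC, hBC⟩ := hzy.1 B
  exact ⟨C, hC.trans hB, hAB.trans hBC⟩

theorem exists_card_eq_forall_notMem_le {ι α : Type*} [Fintype ι] [LinearOrder α] (f : ι → α)
    {k : ℕ} (hk : k ≤ Fintype.card ι) :
    ∃ F : Finset ι, #F = k ∧ ∀ i ∈ F, ∀ j ∉ F, f j ≤ f i := by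
  classical
  induction k with
  | zero => exact ⟨∅, card_empty, by simp⟩
  | succ k ih =>
    obtain ⟨F, hF, htop⟩ := ih (Nat.le_of_succ_le hk)
    have hne : Fᶜ.Nonempty := card_pos.1 (by rw [card_compl]; omega)
    obtain ⟨m, hm, hmax⟩ := exists_max_image Fᶜ f hne
    refine ⟨insert m F, by rw [card_insert_of_notMem (mem_compl.1 hm), hF], fun i hi j hj => ?_⟩
    have hjF : j ∉ F := fun h => hj (mem_insert_of_mem h)
    rcases mem_insert.1 hi with rfl | hiF
    · exact hmax j (mem_compl.2 hjF)
    · exact htop i hiF j hjF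

theorem sum_le_sum_of_forall_notMem_le {ι M : Type*} [AddCommMonoid M] [LinearOrder M]
    [IsOrderedCancelAddMonoid M] {f : ι → M} {B F : Finset ι}
    (hF : ∀ i ∈ F, ∀ j ∉ F, f j ≤ f i) (hcard : #B = #F) : ∑ i ∈ B, f i ≤ ∑ i ∈ F, f i := by
  classical
  rw [← sum_sdiff_le_sum_sdiff]
  have hsdiff : #(B \ F) = #(F \ B) := card_sdiff_comm hcard
  rcases (F \ B).eq_empty_or_nonempty with hempty | hne
  · rw [hempty, card_empty, card_eq_zero] at hsdiff
    rw [hempty, hsdiff]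
  · obtain ⟨m, hm, hmin⟩ := exists_min_image (F \ B) f hne
    calc ∑ i ∈ B \ F, f i
        ≤ #(B \ F) • f m :=
          sum_le_card_nsmul _ _ _ fun j hj => hF m (mem_sdiff.1 hm).1 j (mem_sdiff.1 hj).2
      _ = #(F \ B) • f m := by rw [hsdiff]
      _ ≤ ∑ i ∈ F \ B, f i := card_nsmul_le_sum _ _ _ hmin

theorem Majorizes.add {I K : Type*} [Fintype I] [Fintype K] {y z : I → ℝ} {x w : K → ℝ}
    (hyx : Majorizes y x) (hzw : Majorizes z w) (hyz : Monovary y z) :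
    Majorizes (y + z) (x + w) := by
  refine ⟨fun A => ?_, ?_⟩
  · obtain ⟨B, hB, hxB⟩ := hyx.1 A
    obtain ⟨C, hC, hwC⟩ := hzw.1 A
    obtain ⟨F, hF, htop⟩ := exists_card_eq_forall_notMem_le (y + z) (hB ▸ card_le_univ B)
    -- As `y` and `z` vary together, a top set of `y + z` is a top set of both.
    have htop_y : ∀ i ∈ F, ∀ j ∉ F, y j ≤ y i := fun i hi j hj => by
      by_contra! hlt
      exact (add_lt_add_of_lt_of_le hlt (hyz.symm hlt)).not_ge (htop i hi j hj)
    have htop_z : ∀ i ∈ F, ∀ j ∉ F, z j ≤ z i := fun i hi j hj => by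
      by_contra! hlt
      exact (add_lt_add_of_le_of_lt (hyz hlt) hlt).not_ge (htop i hi j hj)
    refine ⟨F, hF, ?_⟩
    simp only [Pi.add_apply, sum_add_distrib]
    exact add_le_add (hxB.trans (sum_le_sum_of_forall_notMem_le htop_y (hB.trans hF.symm)))
      (hwC.trans (sum_le_sum_of_forall_notMem_le htop_z (hC.trans hF.symm)))
  · simp only [Pi.add_apply, sum_add_distrib, hyx.2, hzw.2]

theorem majorizes_mulVec_of_mem_doublyStochastic {n : Type*} [Fintype n] [DecidableEq n]
    {S : Matrix n n ℝ} (hS : S ∈ doublyStochastic ℝ n) (d : n → ℝ) : Majorizes d (S *ᵥ d) := by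
  refine ⟨fun A => ?_, sum_mulVec_of_mem_doublyStochastic hS⟩
  let partialSum : Matrix n n ℝ →ₗ[ℝ] ℝ :=
    { toFun := fun T => ∑ i ∈ A, (T *ᵥ d) i
      map_add' := fun T T' => by simp only [add_mulVec, Pi.add_apply, sum_add_distrib]
      map_smul' := fun c T => by
        simp only [smul_mulVec, Pi.smul_apply, ← smul_sum, RingHom.id_apply] }
  have hS' : S ∈ convexHull ℝ {σ.permMatrix ℝ | σ : Equiv.Perm n} := by
    rwa [← doublyStochastic_eq_convexHull_permMatrix]
  obtain ⟨_, ⟨σ, rfl⟩, hσ⟩ :=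
    (partialSum.convexOn convex_univ).exists_ge_of_mem_convexHull (Set.subset_univ _) hS'
  refine ⟨A.map σ.toEmbedding, card_map _, hσ.trans_eq ?_⟩
  simp [partialSum, permMatrix_mulVec]

end Majorization

section Spectrum

variable {𝕜 n : Type*} [RCLike 𝕜] [Fintype n] [DecidableEq n]

theorem of_norm_sq_mem_doublyStochastic (U : unitaryGroup n 𝕜) :
    of (fun i j => ‖(U : Matrix n n 𝕜) i j‖ ^ 2) ∈ doublyStochastic ℝ n := by
  refine mem_doublyStochastic_iff_sum.2 ⟨fun i j => sq_nonneg _, fun i => ?_, fun j => ?_⟩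
  · have hrow : ∑ j, U i j * star (U i j) = 1 := by
      simpa [mul_apply] using congr_fun₂ (mem_unitaryGroup_iff.1 U.2) i i
    simp only [RCLike.star_def, RCLike.mul_conj] at hrow
    exact_mod_cast hrow
  · have hcol : ∑ i, star (U i j) * U i j = 1 := by
      simpa [mul_apply] using congr_fun₂ (mem_unitaryGroup_iff'.1 U.2) j j
    simp only [RCLike.star_def, RCLike.conj_mul] at hcol
    exact_mod_cast hcol

theorem majorizes_re_diag_conjStarAlgAut_diagonal (U : unitaryGroup n 𝕜) (d : n → ℝ) :
    Majorizes d fun i => RCLike.re (conjStarAlgAut 𝕜 _ U (diagonal (RCLike.ofReal ∘ d)) i i) := by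
  convert majorizes_mulVec_of_mem_doublyStochastic (of_norm_sq_mem_doublyStochastic U) d
    using 2 with i
  rw [conjStarAlgAut_apply, mul_apply, map_sum]
  refine sum_congr rfl fun j _ => ?_
  rw [mul_diagonal, star_apply, mul_right_comm, RCLike.star_def, RCLike.mul_conj,
    Function.comp_apply]
  norm_cast

theorem majorizes_re_diag_conjStarAlgAut {M : Matrix n n 𝕜} (hM : M.IsHermitian)
    (U : unitaryGroup n 𝕜) :
    Majorizes hM.eigenvalues fun i => RCLike.re (conjStarAlgAut 𝕜 _ U M i i) := by
  have h := majorizes_re_diag_conjStarAlgAut_diagonal (U * hM.eigenvectorUnitary) hM.eigenvalues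
  rwa [conjStarAlgAut_mul_apply, ← hM.spectral_theorem] at h

theorem eigenvalues_eq_re_diag_conjStarAlgAut {M : Matrix n n 𝕜} (hM : M.IsHermitian) :
    hM.eigenvalues =
      fun i => RCLike.re (conjStarAlgAut 𝕜 _ (star hM.eigenvectorUnitary) M i i) := by
  ext i
  simp [hM.conjStarAlgAut_star_eigenvectorUnitary]

theorem majorizes_eigenvalues_diagonal (d : n → ℝ)
    (hd : (diagonal (RCLike.ofReal ∘ d) : Matrix n n 𝕜).IsHermitian) :
    Majorizes d hd.eigenvalues := by
  rw [eigenvalues_eq_re_diag_conjStarAlgAut hd]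
  exact majorizes_re_diag_conjStarAlgAut_diagonal _ d

theorem Majorizes.eigenvalues_add {I : Type*} [Fintype I] {y z : I → ℝ} {M N : Matrix n n 𝕜}
    {hM : M.IsHermitian} {hN : N.IsHermitian} (hy : Majorizes y hM.eigenvalues)
    (hz : Majorizes z hN.eigenvalues) (hyz : Monovary y z) :
    Majorizes (y + z) (hM.add hN).eigenvalues := by
  let U := star (hM.add hN).eigenvectorUnitary
  have hdiag : (hM.add hN).eigenvalues =
      (fun i => RCLike.re (conjStarAlgAut 𝕜 _ U M i i)) +
        fun i => RCLike.re (conjStarAlgAut 𝕜 _ U N i i) := by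
    rw [eigenvalues_eq_re_diag_conjStarAlgAut]
    ext i
    simp only [U, map_add, Matrix.add_apply, Pi.add_apply]
  rw [hdiag]
  exact (hy.trans (majorizes_re_diag_conjStarAlgAut hM U)).add
    (hz.trans (majorizes_re_diag_conjStarAlgAut hN U)) hyz

end Spectrum

section ConjugateSequence

/-- The first `n` terms of the conjugate of the sequence `d` on `S`, as real numbers. Indices start
at `0`, so the `i`-th term counts the `x ∈ S` with `d x ≥ i + 1`. -/
def conjSeq {α : Type*} (S : Finset α) (d : α → ℕ) (n : ℕ) : Fin n → ℝ :=
  fun i => #{x ∈ S | (i : ℕ) + 1 ≤ d x}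

variable {α : Type*} (S : Finset α) (d : α → ℕ)

theorem conjSeq_antitone (n : ℕ) : Antitone (conjSeq S d n) := fun _ _ hij =>
  Nat.cast_le.2 <| card_le_card <| monotone_filter_right S fun _ _ hj =>
    (Nat.succ_le_succ hij).trans hj

theorem sum_conjSeq_filter_lt {n k : ℕ} (hk : k ≤ n) :
    ∑ i : Fin n with i.val < k, conjSeq S d n i = ((∑ x ∈ S, min k (d x) : ℕ) : ℝ) := by
  have hfiber (x : α) : #{i ∈ {i : Fin n | i.val < k} | i.val + 1 ≤ d x} = min k (d x) := by
    simp only [filter_filter, Nat.succ_le_iff, ← lt_min_iff, Fin.card_filter_val_lt]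
    exact min_eq_right (min_le_of_left_le hk)
  simp only [conjSeq, ← Nat.cast_sum, ← hfiber]
  exact congrArg _ (sum_card_bipartiteAbove_eq_sum_card_bipartiteBelow
    fun (i : Fin n) x => i.val + 1 ≤ d x)

theorem majorizes_conjSeq_card_filter {β : Type*} [Fintype β] (r : α → β → Prop)
    [∀ x y, Decidable (r x y)] {n : ℕ} (hn : Fintype.card β ≤ n) :
    Majorizes (conjSeq S (fun x => #{y | r x y}) n) fun y => (#{x ∈ S | r x y} : ℝ) := by
  have hcount (A : Finset β) : ∑ y ∈ A, #{x ∈ S | r x y} = ∑ x ∈ S, #{y ∈ A | r x y} :=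
    (sum_card_bipartiteAbove_eq_sum_card_bipartiteBelow r).symm
  have hdeg (x : α) : #{y | r x y} ≤ n := (card_le_univ _).trans hn
  refine ⟨fun A => ⟨({i | i.val < #A} : Finset (Fin n)), ?_, ?_⟩, ?_⟩
  · rw [Fin.card_filter_val_lt, min_eq_right ((card_le_univ A).trans hn)]
  · rw [sum_conjSeq_filter_lt _ _ ((card_le_univ A).trans hn), ← Nat.cast_sum, hcount]
    exact Nat.cast_le.2 <| sum_le_sum fun x _ =>
      le_min (card_filter_le _ _) (card_le_card (filter_subset_filter _ (subset_univ A)))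
  · have htotal := sum_conjSeq_filter_lt S (fun x => #{y | r x y}) (le_refl n)
    simp only [Fin.is_lt, filter_true, min_eq_right (hdeg _)] at htotal
    rw [htotal, ← Nat.cast_sum, hcount]

end ConjugateSequence

section DeletedVertices

variable {V : Type*} [Fintype V] [DecidableEq V] (D : Finset V)

theorem card_filter_eq_card_filter_notMem_add (p : V → Prop) [DecidablePred p] :
    #{v | p v} = #{v : {v // v ∉ D} | p v} + #{v ∈ D | p v} := by
  simp only [card_filter]
  rw [← sum_compl_add_sum D, sum_subtype Dᶜ fun _ => mem_compl]

theorem conjSeq_univ_eq_conjSeq_notMem_add (d : V → ℕ) (n : ℕ) :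
    conjSeq univ d n = conjSeq univ (fun v : {v // v ∉ D} => d v) n + conjSeq D d n := by
  ext i
  simp only [conjSeq, Pi.add_apply]
  exact_mod_cast card_filter_eq_card_filter_notMem_add D fun v => i.val + 1 ≤ d v

variable (R : Type*) [AddGroupWithOne R] (G : SimpleGraph V) [DecidableRel G.Adj]

theorem lapMatrix_eq_of_card_filter_adj :
    G.lapMatrix R =
      of fun v w => if v = w then (#{u | G.Adj v u} : R) else if G.Adj v w then -1 else 0 := by
  ext v w
  rcases eq_or_ne v w with rfl | hvw
  · simp [SimpleGraph.lapMatrix, SimpleGraph.degMatrix, ← G.card_neighborFinset_eq_degree,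
      G.neighborFinset_eq_filter]
  · by_cases hadj : G.Adj v w <;>
      simp [SimpleGraph.lapMatrix, SimpleGraph.degMatrix, hvw, hadj]

theorem lapMatrix_submatrix_notMem_eq_lapMatrix_comap_add :
    (G.lapMatrix R).submatrix Subtype.val Subtype.val =
      (G.comap (Subtype.val : {v // v ∉ D} → V)).lapMatrix R +
        diagonal fun v : {v // v ∉ D} => (#{u ∈ D | G.Adj v u} : R) := by
  ext v w
  simp only [lapMatrix_eq_of_card_filter_adj, submatrix_apply, Matrix.add_apply, of_apply,
    SimpleGraph.comap_adj]
  rcases eq_or_ne v w with rfl | hvw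
  · simp only [if_true, diagonal_apply_eq]
    exact_mod_cast congrArg (Nat.cast (R := R))
      (card_filter_eq_card_filter_notMem_add D fun u => G.Adj v u)
  · rw [if_neg (Subtype.coe_ne_coe.2 hvw), if_neg hvw, diagonal_apply_ne _ hvw, add_zero]

end DeletedVertices

theorem dirichlet_groneMerris {V : Type*} [Fintype V] [DecidableEq V]
    (G : SimpleGraph V) [DecidableRel G.Adj] (D : Finset V)
    (LU LED : Matrix {v : V // v ∉ D} {v : V // v ∉ D} ℝ)
    (hLU : LU = Matrix.of fun v w =>
      if v = w then ((Finset.univ.filter fun u : {v : V // v ∉ D} => G.Adj v.1 u.1).card : ℝ)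
      else if G.Adj v.1 w.1 then -1 else 0)
    (hLED : LED = (G.lapMatrix ℝ).submatrix Subtype.val Subtype.val)
    (hU : LU.IsHermitian) (hED : LED.IsHermitian)
    (dTU aT dTED : Fin (Fintype.card {v : V // v ∉ D}) → ℝ)
    (hdTU : dTU = fun i : Fin (Fintype.card {v : V // v ∉ D}) => ((Finset.univ.filter fun v : {v : V // v ∉ D} =>
      (i : ℕ) + 1 ≤ (Finset.univ.filter fun u : {v : V // v ∉ D} => G.Adj v.1 u.1).card).card : ℝ))
    (haT : aT = fun i : Fin (Fintype.card {v : V // v ∉ D}) => ((D.filter fun v =>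
      (i : ℕ) + 1 ≤ (Finset.univ.filter fun u : {v : V // v ∉ D} => G.Adj v u.1).card).card : ℝ))
    (hdTED : dTED = fun i : Fin (Fintype.card {v : V // v ∉ D}) => ((Finset.univ.filter fun v : V =>
      (i : ℕ) + 1 ≤ (Finset.univ.filter fun u : {v : V // v ∉ D} => G.Adj v u.1).card).card : ℝ)) :
    (LED = LU + Matrix.diagonal fun v => ((D.filter fun u => G.Adj v.1 u).card : ℝ)) ∧
    (Majorizes dTU hU.eigenvalues → Majorizes (dTU + aT) hED.eigenvalues) ∧
    (Majorizes dTU hU.eigenvalues → Majorizes dTED hED.eigenvalues) := by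
  have hinduced : LU = (G.comap Subtype.val).lapMatrix ℝ :=
    hLU.trans (lapMatrix_eq_of_card_filter_adj ℝ (G.comap Subtype.val)).symm
  have hdecomp : LED = LU + diagonal fun v => (#{u ∈ D | G.Adj v.1 u} : ℝ) := by
    rw [hLED, hinduced, lapMatrix_submatrix_notMem_eq_lapMatrix_comap_add]
  have hsplit : dTED = dTU + aT := by
    rw [hdTED, hdTU, haT]
    exact conjSeq_univ_eq_conjSeq_notMem_add D _ _
  have hmono : Monovary dTU aT := by
    rw [hdTU, haT]
    exact (conjSeq_antitone _ _ _).monovary (conjSeq_antitone _ _ _)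
  have hGaleRyser : Majorizes aT fun v : {v // v ∉ D} => (#{u ∈ D | G.Adj v.1 u} : ℝ) := by
    simp only [haT, G.adj_comm (Subtype.val _)]
    exact majorizes_conjSeq_card_filter D (fun u (v : {v // v ∉ D}) => G.Adj u v.1) le_rfl
  have hmain (hGM : Majorizes dTU hU.eigenvalues) : Majorizes (dTU + aT) hED.eigenvalues := by
    subst hdecomp
    exact hGM.eigenvalues_add
      (hGaleRyser.trans (majorizes_eigenvalues_diagonal _ (isHermitian_diagonal _))) hmono
  exact ⟨hdecomp, hmain, fun hGM => hsplit ▸ hmain hGM⟩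
end
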